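/- Fix n ≥ 3 and let β_n, z, Z be as defined. Then for every q with 0 < q < n, ∫_0^1 min{z(t), q}·(1 − Z(t)/n)^n dt ≥ (1 − 5/n)·(1/(1+β_n))·(1 − e^{−q}). -/

import Mathlib

open Real MeasureTheory intervalIntegral

/-!
Since `z' = r(z)` with `r(v) = 1 + v + β e^v` and `r - r' = id`, the function `z - log r(z)` is an
antiderivative of `z`, whence `e^{-Z} = r(z) e^{-z} / (1 + β) = z' e^{-z} / (1 + β)`. The change of
variables `v = z(t)` therefore evaluates the integral with `e^{-Z}` in place of `(1 - Z / n)^n`: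
`(1 + β) ∫ min (z, q) e^{-Z} = ∫_0^n min (v, q) e^{-v} dv = 1 - e^{-q} - q e^{-n}`,
which differs from `1 - e^{-q}` by at most a fraction `1 / n`.

The replacement costs a factor `1 - Z² / n`. As `r(z) e^{-z} ≥ β`, one has `Z ≤ log ((1 + β) / β)`,
and this is at most `2`: if `β` were smaller than `1 / (e² - 1)`, the Cauchy–Schwarz inequality on
`[0, 1]` and on `[1, 3]` would give `∫_0^3 1 / r > 1`. Hence the total loss is `4 / n + 1 / n`.
-/

section

open Set

theorem sq_sub_div_integral_le_integral_inv {f : ℝ → ℝ} {a b : ℝ} (hab : a < b)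
    (hf : ContinuousOn f (Icc a b)) (hpos : ∀ x ∈ Icc a b, 0 < f x) :
    (b - a) ^ 2 / ∫ x in a..b, f x ≤ ∫ x in a..b, (f x)⁻¹ := by
  rw [← uIcc_of_le hab.le] at hf
  have hf_int : IntervalIntegrable f volume a b := hf.intervalIntegrable
  have hinv_int : IntervalIntegrable (fun x ↦ (f x)⁻¹) volume a b :=
    (hf.inv₀ fun x hx ↦ (hpos x (uIcc_of_le hab.le ▸ hx)).ne').intervalIntegrable
  have hI : 0 < ∫ x in a..b, f x :=
    intervalIntegral_pos_of_pos_on hf_int (fun x hx ↦ hpos x (Ioo_subset_Icc_self hx)) hab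
  set c := (b - a) / ∫ x in a..b, f x with hc
  -- The tangent to `y ↦ y⁻¹` at the mean value `c⁻¹` of `f`.
  have htangent : ∀ x ∈ Icc a b, 2 * c - c ^ 2 * f x ≤ (f x)⁻¹ := fun x hx ↦ by
    have hfx := hpos x hx
    have hsq : (f x)⁻¹ - (2 * c - c ^ 2 * f x) = (1 - c * f x) ^ 2 / f x := by
      field_simp
      ring
    have : 0 ≤ (1 - c * f x) ^ 2 / f x := by positivity
    linarith
  calc (b - a) ^ 2 / ∫ x in a..b, f x
      = ∫ x in a..b, (2 * c - c ^ 2 * f x) := by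
        rw [integral_sub intervalIntegrable_const (hf_int.const_mul _),
          intervalIntegral.integral_const, intervalIntegral.integral_const_mul, smul_eq_mul, hc]
        field_simp
        ring
    _ ≤ ∫ x in a..b, (f x)⁻¹ :=
        integral_mono_on hab.le (intervalIntegrable_const.sub (hf_int.const_mul _)) hinv_int
          htangent

theorem one_sub_sq_div_mul_exp_neg_le_one_sub_div_pow {n : ℕ} {x : ℝ} (hx : |x| ≤ n) :
    (1 - x ^ 2 / n) * exp (-x) ≤ (1 - x / n) ^ n := by
  rcases n.eq_zero_or_pos with rfl | hn
  · have hx0 : x = 0 := by simpa using hx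
    simp [hx0]
  have hn_pos : (0 : ℝ) < n := by exact_mod_cast hn
  obtain ⟨hlo, hhi⟩ : -1 ≤ x / n ∧ x / n ≤ 1 := by
    rwa [← abs_le, abs_div, Nat.abs_cast, div_le_one hn_pos]
  have hsq : (x / n) ^ 2 ≤ 1 := sq_le_one_iff_abs_le_one _ |>.mpr (abs_le.mpr ⟨hlo, hhi⟩)
  have hfactor : 1 + -(x / n) ^ 2 ≤ (1 - x / n) * exp (x / n) := by
    nlinarith [add_one_le_exp (x / n)]
  have hbernoulli : 1 - x ^ 2 / n ≤ (1 - x / n) ^ n * exp x :=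
    calc 1 - x ^ 2 / n = 1 + n * -(x / n) ^ 2 := by field_simp; ring
      _ ≤ (1 + -(x / n) ^ 2) ^ n := one_add_mul_le_pow (by linarith) n
      _ ≤ ((1 - x / n) * exp (x / n)) ^ n := pow_le_pow_left₀ (by linarith) hfactor n
      _ = (1 - x / n) ^ n * exp x := by
        rw [mul_pow, ← exp_nat_mul, mul_div_cancel₀ _ hn_pos.ne']
  rwa [exp_neg, ← div_eq_mul_inv, div_le_iff₀ (exp_pos x)]

theorem one_sub_sq_div_mul_integral_mul_exp_neg_le {n : ℕ} {a b c : ℝ} {w Z : ℝ → ℝ} (hab : a ≤ b)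
    (hcn : c ≤ n) (hw : ContinuousOn w (Icc a b)) (hw_nonneg : ∀ t ∈ Icc a b, 0 ≤ w t)
    (hZ : ContinuousOn Z (Icc a b)) (hZc : ∀ t ∈ Icc a b, |Z t| ≤ c) :
    (1 - c ^ 2 / n) * ∫ t in a..b, w t * exp (-Z t) ≤ ∫ t in a..b, w t * (1 - Z t / n) ^ n := by
  have hIcc := uIcc_of_le hab
  rw [← intervalIntegral.integral_const_mul]
  refine integral_mono_on hab (ContinuousOn.intervalIntegrable ?_)
    (ContinuousOn.intervalIntegrable ?_) fun t ht ↦ ?_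
  · rw [hIcc]; fun_prop
  · rw [hIcc]; fun_prop
  · calc (1 - c ^ 2 / n) * (w t * exp (-Z t))
        = w t * ((1 - c ^ 2 / n) * exp (-Z t)) := by ring
      _ ≤ w t * ((1 - Z t ^ 2 / n) * exp (-Z t)) := by
        have hsq : Z t ^ 2 ≤ c ^ 2 := sq_le_sq.mpr ((hZc t ht).trans (le_abs_self c))
        gcongr
        exact hw_nonneg t ht
      _ ≤ w t * (1 - Z t / n) ^ n :=
        mul_le_mul_of_nonneg_left
          (one_sub_sq_div_mul_exp_neg_le_one_sub_div_pow ((hZc t ht).trans hcn)) (hw_nonneg t ht)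

theorem integral_min_mul_exp_neg {q x : ℝ} (hq : 0 ≤ q) (hqx : q ≤ x) :
    ∫ v in (0 : ℝ)..x, min v q * exp (-v) = 1 - exp (-q) - q * exp (-x) := by
  have hderiv_exp (v : ℝ) : HasDerivAt (fun v ↦ exp (-v)) (-exp (-v)) v := by
    simpa using (hasDerivAt_neg v).exp
  have hleft : ∫ v in (0 : ℝ)..q, min v q * exp (-v) = 1 - (q + 1) * exp (-q) := by
    have hcongr : ∫ v in (0 : ℝ)..q, min v q * exp (-v) = ∫ v in (0 : ℝ)..q, v * exp (-v) :=
      integral_congr fun v hv ↦ by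
        simp only [min_eq_left (uIcc_of_le hq ▸ hv).2]
    rw [hcongr, integral_eq_sub_of_hasDerivAt (f := fun v ↦ -((v + 1) * exp (-v)))
      (fun v _ ↦ (((hasDerivAt_id v).add_const 1).mul (hderiv_exp v)).neg.congr_deriv
        (by simp only [id]; ring)) (Continuous.intervalIntegrable (by fun_prop) _ _)]
    simp only [neg_zero, exp_zero, zero_add, mul_one]
    ring
  have hright : ∫ v in q..x, min v q * exp (-v) = q * (exp (-q) - exp (-x)) := by
    have hcongr : ∫ v in q..x, min v q * exp (-v) = ∫ v in q..x, q * exp (-v) :=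
      integral_congr fun v hv ↦ by
        simp only [min_eq_right (uIcc_of_le hqx ▸ hv).1]
    rw [hcongr, intervalIntegral.integral_const_mul,
      integral_comp_neg (fun v ↦ exp v), integral_exp]
  have hint (a b : ℝ) : IntervalIntegrable (fun v ↦ min v q * exp (-v)) volume a b :=
    Continuous.intervalIntegrable (by fun_prop) a b
  rw [← integral_add_adjacent_intervals (hint 0 q) (hint q x), hleft, hright]
  ring

theorem mul_add_one_le_exp {x : ℝ} (hx : 0 ≤ x) : x * (x + 1) ≤ exp x := by
  have htaylor : 1 + x + x ^ 2 / 2 + x ^ 3 / 6 ≤ exp x := by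
    simpa [Finset.sum_range_succ, Nat.factorial] using sum_le_exp_of_nonneg hx 4
  nlinarith [mul_nonneg (add_nonneg hx zero_le_one) (sq_nonneg (x - 2))]

theorem div_one_add_le_one_sub_exp_neg {q : ℝ} (hq : -1 < q) : q / (1 + q) ≤ 1 - exp (-q) := by
  have hpos : 0 < 1 + q := by linarith
  have hexp : exp (-q) ≤ (1 + q)⁻¹ := by
    rw [exp_neg]
    exact inv_anti₀ hpos (by linarith [add_one_le_exp q])
  calc q / (1 + q) = 1 - (1 + q)⁻¹ := by field_simp; ring
    _ ≤ 1 - exp (-q) := by linarith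

theorem one_sub_inv_mul_one_sub_exp_neg_le_integral_min_mul_exp_neg {q x : ℝ} (hq : 0 ≤ q)
    (hx : 0 < x) (hqx : q ≤ x) :
    (1 - 1 / x) * (1 - exp (-q)) ≤ ∫ v in (0 : ℝ)..x, min v q * exp (-v) := by
  have hexp_x : exp (-x) ≤ 1 / (x * (1 + x)) := by
    rw [exp_neg, ← one_div]
    exact one_div_le_one_div_of_le (by positivity) (by linarith [mul_add_one_le_exp hx.le])
  have htail : q * exp (-x) ≤ 1 / x * (1 - exp (-q)) :=
    calc q * exp (-x) ≤ q * (1 / (x * (1 + x))) := by gcongr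
      _ = 1 / x * (q / (1 + x)) := by field_simp
      _ ≤ 1 / x * (q / (1 + q)) := by gcongr
      _ ≤ 1 / x * (1 - exp (-q)) := by
        gcongr
        exact div_one_add_le_one_sub_exp_neg (by linarith)
  rw [integral_min_mul_exp_neg hq hqx]
  linarith

theorem one_sub_add_one_div_mul_one_sub_exp_neg_le_mul_integral_min {c q x : ℝ} (hc : 0 ≤ c)
    (hq : 0 ≤ q) (hx : 0 < x) (hqx : q ≤ x) :
    (1 - (c + 1) / x) * (1 - exp (-q)) ≤
      (1 - c / x) * ∫ v in (0 : ℝ)..x, min v q * exp (-v) := by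
  have hlower := one_sub_inv_mul_one_sub_exp_neg_le_integral_min_mul_exp_neg hq hx hqx
  have hupper : ∫ v in (0 : ℝ)..x, min v q * exp (-v) ≤ 1 - exp (-q) := by
    rw [integral_min_mul_exp_neg hq hqx]
    exact sub_le_self _ (by positivity)
  -- The bound from above serves the second term, so no sign of `1 - c / x` is involved.
  calc (1 - (c + 1) / x) * (1 - exp (-q))
      = (1 - 1 / x) * (1 - exp (-q)) - c / x * (1 - exp (-q)) := by ring
    _ ≤ (∫ v in (0 : ℝ)..x, min v q * exp (-v)) -
          c / x * ∫ v in (0 : ℝ)..x, min v q * exp (-v) := by gcongr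
    _ = (1 - c / x) * ∫ v in (0 : ℝ)..x, min v q * exp (-v) := by ring

/-- The right-hand side of the differential equation `z' = 1 + z + β e^z`. In terms of `y = e^{-z}`
this is the Hill–Kertz equation `y' = y (log y - 1) - β`. -/
noncomputable def hillKertzRate (β v : ℝ) : ℝ := 1 + v + β * exp v

namespace hillKertzRate

variable {β : ℝ}

theorem continuous (β : ℝ) : Continuous (hillKertzRate β) := by
  unfold hillKertzRate
  fun_prop

theorem pos {v : ℝ} (hβ : 0 ≤ β) (hv : 0 ≤ v) : 0 < hillKertzRate β v := by
  unfold hillKertzRate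
  positivity

theorem hasDerivAt (β v : ℝ) : HasDerivAt (hillKertzRate β) (1 + β * exp v) v :=
  ((hasDerivAt_id v).const_add 1).add ((hasDerivAt_exp v).const_mul β)

theorem integral_eq (β a b : ℝ) :
    ∫ v in a..b, hillKertzRate β v =
      b - a + (b ^ 2 - a ^ 2) / 2 + β * (exp b - exp a) := by
  unfold hillKertzRate
  rw [integral_add (Continuous.intervalIntegrable (by fun_prop) _ _)
    (Continuous.intervalIntegrable (by fun_prop) _ _),
    integral_add intervalIntegrable_const intervalIntegrable_id]
  simp

theorem sq_sub_div_le_integral_inv {a b : ℝ} (hβ : 0 ≤ β) (ha : 0 ≤ a) (hab : a < b) :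
    (b - a) ^ 2 / (b - a + (b ^ 2 - a ^ 2) / 2 + β * (exp b - exp a)) ≤
      ∫ v in a..b, (hillKertzRate β v)⁻¹ := by
  rw [← integral_eq]
  exact sq_sub_div_integral_le_integral_inv hab (continuous β).continuousOn
    fun v hv ↦ pos hβ (ha.trans hv.1)

theorem intervalIntegrable_inv {a b : ℝ} (hβ : 0 ≤ β) (ha : 0 ≤ a) (hb : 0 ≤ b) :
    IntervalIntegrable (fun v ↦ (hillKertzRate β v)⁻¹) volume a b :=
  ((continuous β).continuousOn.inv₀ fun _ hv ↦
    (pos hβ ((le_min ha hb).trans hv.1)).ne').intervalIntegrable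

theorem one_lt_integral_inv (hβ : 0 ≤ β) (hβ_le : β * (exp 2 - 1) ≤ 1) :
    1 < ∫ v in (0 : ℝ)..3, (hillKertzRate β v)⁻¹ := by
  have he_gt := exp_one_gt_d9
  have he_lt := exp_one_lt_d9
  have hexp_two : exp 2 = exp 1 ^ 2 := by rw [← exp_nat_mul]; norm_num
  have hexp_three : exp 3 = exp 1 ^ 3 := by rw [← exp_nat_mul]; norm_num
  rw [hexp_two] at hβ_le
  -- `hβ_le` bounds the two left-hand sides by `1 / (e + 1)` and by `e`.
  have hleft_rate : β * (exp 1 - 1) ≤ 27 / 100 := by nlinarith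
  have hright_rate : β * (exp 3 - exp 1) ≤ 272 / 100 := by
    rw [hexp_three]
    nlinarith
  have hleft : 1 / (3 / 2 + 27 / 100) ≤ ∫ v in (0 : ℝ)..1, (hillKertzRate β v)⁻¹ := by
    refine le_trans ?_ (sq_sub_div_le_integral_inv hβ le_rfl zero_lt_one)
    have : 0 ≤ β * (exp 1 - 1) := mul_nonneg hβ (by linarith)
    rw [exp_zero]
    gcongr <;> linarith
  have hright : 4 / (6 + 272 / 100) ≤ ∫ v in (1 : ℝ)..3, (hillKertzRate β v)⁻¹ := by
    refine le_trans ?_ (sq_sub_div_le_integral_inv hβ zero_le_one (by norm_num))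
    have : 0 ≤ β * (exp 3 - exp 1) := mul_nonneg hβ (by simp)
    gcongr <;> linarith
  rw [← integral_add_adjacent_intervals (intervalIntegrable_inv hβ le_rfl zero_le_one)
    (intervalIntegrable_inv hβ zero_le_one zero_le_three)]
  linarith

theorem one_add_le_mul_exp_two {x : ℝ} (hβ : 0 ≤ β) (hx : 3 ≤ x)
    (hint : ∫ v in (0 : ℝ)..x, (hillKertzRate β v)⁻¹ ≤ 1) : 1 + β ≤ β * exp 2 := by
  by_contra! hlt
  have htail : 0 ≤ ∫ v in (3 : ℝ)..x, (hillKertzRate β v)⁻¹ :=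
    integral_nonneg hx fun v hv ↦ (inv_pos.mpr (pos hβ (by linarith [hv.1]))).le
  rw [← integral_add_adjacent_intervals (intervalIntegrable_inv hβ le_rfl zero_le_three)
    (intervalIntegrable_inv hβ zero_le_three (by linarith))] at hint
  linarith [one_lt_integral_inv hβ (by linarith)]

variable {z : ℝ → ℝ} {a b : ℝ}

theorem integral_solution_eq_sub_log
    (hz : ∀ t ∈ uIcc a b, HasDerivAt z (hillKertzRate β (z t)) t)
    (hne : ∀ t ∈ uIcc a b, hillKertzRate β (z t) ≠ 0) :
    ∫ t in a..b, z t =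
      (z b - log (hillKertzRate β (z b))) - (z a - log (hillKertzRate β (z a))) := by
  have hz_cont : ContinuousOn z (uIcc a b) := HasDerivAt.continuousOn hz
  refine integral_eq_sub_of_hasDerivAt (f := fun t ↦ z t - log (hillKertzRate β (z t)))
    (fun t ht ↦ ?_) hz_cont.intervalIntegrable
  have hlog := ((hasDerivAt β (z t)).comp t (hz t ht)).log (hne t ht)
  refine ((hz t ht).sub hlog).congr_deriv ?_
  rw [Function.comp_apply, mul_div_cancel_right₀ _ (hne t ht), hillKertzRate]
  ring

theorem exp_neg_integral_solution
    (hz : ∀ t ∈ uIcc a b, HasDerivAt z (hillKertzRate β (z t)) t)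
    (hpos : ∀ t ∈ uIcc a b, 0 < hillKertzRate β (z t)) :
    exp (-∫ t in a..b, z t) =
      hillKertzRate β (z b) * exp (z a - z b) / hillKertzRate β (z a) := by
  rw [integral_solution_eq_sub_log hz fun t ht ↦ (hpos t ht).ne']
  have hsplit : -((z b - log (hillKertzRate β (z b))) - (z a - log (hillKertzRate β (z a)))) =
      log (hillKertzRate β (z b)) + (z a - z b) - log (hillKertzRate β (z a)) := by ring
  rw [hsplit, exp_sub, exp_add, exp_log (hpos b right_mem_uIcc), exp_log (hpos a left_mem_uIcc)]

theorem integral_solution_le_log (hβ : 0 < β)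
    (hz : ∀ t ∈ uIcc a b, HasDerivAt z (hillKertzRate β (z t)) t)
    (hz_nonneg : ∀ t ∈ uIcc a b, 0 ≤ z t) :
    ∫ t in a..b, z t ≤ log (hillKertzRate β (z a) / β) - z a := by
  have hpos (t) (ht : t ∈ uIcc a b) : 0 < hillKertzRate β (z t) := pos hβ.le (hz_nonneg t ht)
  have hlog : log β + z b ≤ log (hillKertzRate β (z b)) := by
    rw [le_log_iff_exp_le (hpos b right_mem_uIcc), exp_add, exp_log hβ, hillKertzRate]
    linarith [hz_nonneg b right_mem_uIcc]
  rw [integral_solution_eq_sub_log hz fun t ht ↦ (hpos t ht).ne',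
    log_div (hpos a left_mem_uIcc).ne' hβ.ne']
  linarith

theorem abs_integral_solution_le_two (hβ : 0 < β) (hβ_exp : 1 + β ≤ β * exp 2) (hab : a ≤ b)
    (hz : ∀ t ∈ Icc a b, HasDerivAt z (hillKertzRate β (z t)) t)
    (hz_nonneg : ∀ t ∈ Icc a b, 0 ≤ z t) (hza : z a = 0) :
    |∫ t in a..b, z t| ≤ 2 := by
  rw [abs_of_nonneg (integral_nonneg hab hz_nonneg)]
  rw [← uIcc_of_le hab] at hz hz_nonneg
  calc ∫ t in a..b, z t ≤ log (hillKertzRate β (z a) / β) - z a :=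
        integral_solution_le_log hβ hz hz_nonneg
    _ = log ((1 + β) / β) := by simp [hza, hillKertzRate]
    _ ≤ 2 := by
      rw [log_le_iff_le_exp (by positivity), div_le_iff₀ hβ]
      linarith

theorem integral_comp_mul_exp_neg_integral_solution {g : ℝ → ℝ} (hg : Continuous g)
    (hz : ∀ t ∈ uIcc a b, HasDerivAt z (hillKertzRate β (z t)) t)
    (hpos : ∀ t ∈ uIcc a b, 0 < hillKertzRate β (z t)) :
    ∫ t in a..b, g (z t) * exp (-∫ u in a..t, z u) =
      exp (z a) / hillKertzRate β (z a) * ∫ v in z a..z b, g v * exp (-v) := by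
  have hz_cont : ContinuousOn z (uIcc a b) := HasDerivAt.continuousOn hz
  have hsubst : ∫ t in a..b, g (z t) * exp (-z t) * hillKertzRate β (z t) =
      ∫ v in z a..z b, g v * exp (-v) :=
    integral_comp_mul_deriv (g := fun v ↦ g v * exp (-v)) hz
      ((continuous β).comp_continuousOn hz_cont) (by fun_prop)
  rw [← hsubst, ← intervalIntegral.integral_const_mul]
  refine integral_congr fun t ht ↦ ?_
  have hsub : uIcc a t ⊆ uIcc a b := uIcc_subset_uIcc_left ht
  simp only [exp_neg_integral_solution (fun s hs ↦ hz s (hsub hs)) fun s hs ↦ hpos s (hsub hs),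
    sub_eq_add_neg, exp_add]
  ring

theorem one_sub_four_div_mul_integral_le_integral_solution_pow {n : ℕ} {g : ℝ → ℝ} (hβ : 0 < β)
    (hβ_exp : 1 + β ≤ β * exp 2) (hn : 2 ≤ n) (hab : a ≤ b)
    (hz : ∀ t ∈ Icc a b, HasDerivAt z (hillKertzRate β (z t)) t)
    (hz_nonneg : ∀ t ∈ Icc a b, 0 ≤ z t) (hza : z a = 0)
    (hg : Continuous g) (hg_nonneg : ∀ v, 0 ≤ v → 0 ≤ g v) :
    1 / (1 + β) * ((1 - 4 / n) * ∫ v in (0 : ℝ)..z b, g v * exp (-v)) ≤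
      ∫ t in a..b, g (z t) * (1 - (∫ u in a..t, z u) / n) ^ n := by
  have hz_cont : ContinuousOn z (Icc a b) := HasDerivAt.continuousOn hz
  have hZ_cont : ContinuousOn (fun t ↦ ∫ u in a..t, z u) (Icc a b) := by
    rw [← uIcc_of_le hab] at hz_cont ⊢
    exact continuousOn_primitive_interval hz_cont.integrableOn_uIcc
  have hZ_abs (t) (ht : t ∈ Icc a b) : |∫ u in a..t, z u| ≤ 2 :=
    have hsub : Icc a t ⊆ Icc a b := Icc_subset_Icc_right ht.2
    abs_integral_solution_le_two hβ hβ_exp ht.1 (fun s hs ↦ hz s (hsub hs))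
      (fun s hs ↦ hz_nonneg s (hsub hs)) hza
  have hsubst : ∫ t in a..b, g (z t) * exp (-∫ u in a..t, z u) =
      1 / (1 + β) * ∫ v in (0 : ℝ)..z b, g v * exp (-v) := by
    rw [← uIcc_of_le hab] at hz hz_nonneg
    rw [integral_comp_mul_exp_neg_integral_solution hg hz fun t ht ↦ pos hβ.le (hz_nonneg t ht),
      hza]
    simp [hillKertzRate]
  calc 1 / (1 + β) * ((1 - 4 / n) * ∫ v in (0 : ℝ)..z b, g v * exp (-v))
      = (1 - 2 ^ 2 / n) * ∫ t in a..b, g (z t) * exp (-∫ u in a..t, z u) := by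
        rw [hsubst]
        ring
    _ ≤ ∫ t in a..b, g (z t) * (1 - (∫ u in a..t, z u) / n) ^ n :=
        one_sub_sq_div_mul_integral_mul_exp_neg_le hab (by exact_mod_cast hn)
          (hg.comp_continuousOn hz_cont) (fun t ht ↦ hg_nonneg _ (hz_nonneg t ht)) hZ_cont hZ_abs

end hillKertzRate

end

/-- For `n ≥ 3`, define `β_n > 0` as the unique solution of
`∫_0^n dz/(1 + z + β_n e^z) = 1`, let `z : [0,1] → [0,n]` solve the ODE
`z'(s) = 1 + z(s) + β_n e^{z(s)}` with `z(0) = 0` (so that `z(1) = n`), and let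
`Z(t) = ∫_0^t z(u) du`.  Then for every `q` with `0 < q < n`,
`∫_0^1 min{z(t), q}·(1 − Z(t)/n)^n dt ≥ (1 − 5/n)·(1/(1+β_n))·(1 − e^{−q})`,
where `(1 − Z(t)/n)^n = exp_n(−Z(t))` with `exp_n(λ) = (1 + λ/n)^n`. -/
theorem integral_term_lower_bound (n : ℕ) (hn : 3 ≤ n) (β : ℝ) (hβpos : 0 < β)
    (hβ : ∫ v in (0:ℝ)..(n : ℝ), (1 + v + β * Real.exp v)⁻¹ = 1)
    (z : ℝ → ℝ) (hz0 : z 0 = 0) (hz1 : z 1 = n)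
    (hzrange : ∀ s ∈ Set.Icc (0:ℝ) 1, z s ∈ Set.Icc (0:ℝ) (n : ℝ))
    (hzderiv : ∀ s ∈ Set.Icc (0:ℝ) 1,
      HasDerivAt z (1 + z s + β * Real.exp (z s)) s)
    (Z : ℝ → ℝ) (hZ : ∀ t, Z t = ∫ u in (0:ℝ)..t, z u) :
    ∀ q : ℝ, 0 < q → q < n →
      (1 - 5 / (n : ℝ)) * (1 / (1 + β)) * (1 - Real.exp (-q))
        ≤ ∫ t in (0:ℝ)..1, min (z t) q * (1 - Z t / (n : ℝ)) ^ n := by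
  intro q hq hqn
  have hn_pos : (0 : ℝ) < n := hq.trans hqn
  have hβ_exp : 1 + β ≤ β * exp 2 :=
    hillKertzRate.one_add_le_mul_exp_two hβpos.le (by exact_mod_cast hn) hβ.le
  calc (1 - 5 / (n : ℝ)) * (1 / (1 + β)) * (1 - exp (-q))
      = 1 / (1 + β) * ((1 - (4 + 1) / n) * (1 - exp (-q))) := by ring
    _ ≤ 1 / (1 + β) * ((1 - 4 / n) * ∫ v in (0 : ℝ)..z 1, min v q * exp (-v)) := by
      rw [hz1]
      refine mul_le_mul_of_nonneg_left ?_ (by positivity)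
      exact one_sub_add_one_div_mul_one_sub_exp_neg_le_mul_integral_min (by norm_num) hq.le hn_pos
        hqn.le
    _ ≤ ∫ t in (0 : ℝ)..1, min (z t) q * (1 - Z t / n) ^ n := by
      simp only [hZ]
      exact hillKertzRate.one_sub_four_div_mul_integral_le_integral_solution_pow hβpos hβ_exp
        (by omega) zero_le_one hzderiv (fun t ht ↦ (hzrange t ht).1) hz0 (by fun_prop)
        fun v hv ↦ le_min hv hq.le
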